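/- There exists a semigroup S that is DSC, regular, and bisimple, but is not a group. -/

import Mathlib

/-- DSC property for a multiplication given explicitly as a function: every
subset of `S × S` containing the diagonal and closed under the (coordinatewise)
multiplication is symmetric and transitive, i.e. a congruence. -/
def IsDSCOf {S : Type*} (mul : S → S → S) : Prop :=
  ∀ ρ : Set (S × S),
    (∀ x : S, (x, x) ∈ ρ) →
    (∀ p q : S × S, p ∈ ρ → q ∈ ρ → (mul p.1 q.1, mul p.2 q.2) ∈ ρ) →
    ((∀ x y : S, ((x, y) : S × S) ∈ ρ → ((y, x) : S × S) ∈ ρ) ∧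
     (∀ x y z : S, ((x, y) : S × S) ∈ ρ → ((y, z) : S × S) ∈ ρ →
        ((x, z) : S × S) ∈ ρ))

/-- A semigroup is a group if it has a (two-sided) identity element with
respect to which every element has a two-sided inverse. -/
def IsGroupOf {S : Type*} (mul : S → S → S) : Prop :=
  ∃ e : S, (∀ s : S, mul e s = s ∧ mul s e = s) ∧
    ∀ s : S, ∃ t : S, mul s t = e ∧ mul t s = e

/-- Green's relation `R`: `x R y` iff `x S¹ = y S¹`. -/
def GreenROf {S : Type*} (mul : S → S → S) (x y : S) : Prop :=
  (x = y ∨ ∃ u : S, x = mul y u) ∧ (y = x ∨ ∃ u : S, y = mul x u)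

/-- Green's relation `L`: `x L y` iff `S¹ x = S¹ y`. -/
def GreenLOf {S : Type*} (mul : S → S → S) (x y : S) : Prop :=
  (x = y ∨ ∃ u : S, x = mul u y) ∧ (y = x ∨ ∃ u : S, y = mul u x)

/-! The witness is the monoid of finite-to-one maps `ℕ → ℕ` modulo equality off a finite set.

If two such maps `a`, `b` differ infinitely often, then along some injection `y` all the values of
`a` and `b` are distinct, so a map `x` can be prescribed on them at will: `x ∘ a ∘ y` and
`x ∘ b ∘ y` can be any two finite-to-one maps. A diagonal subsemigroup with one off-diagonal pair is
therefore everything; taking the two maps equal shows that cancellation fails. Regularity and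
bisimplicity hold because each map is a split injection after a split surjection. -/

open Filter Function

section PairTransitive

/-- The two-sided translations `s ↦ x * s * y` carry every pair of distinct elements of `S` to every
pair, including the diagonal ones. -/
def IsPairTransitive (S : Type*) [Mul S] : Prop :=
  ∀ ⦃a b : S⦄, a ≠ b → ∀ c d : S, ∃ x y : S, x * a * y = c ∧ x * b * y = d

theorem IsPairTransitive.isDSCOf {S : Type*} [Mul S] (h : IsPairTransitive S) :
    IsDSCOf ((· * ·) : S → S → S) := by
  intro ρ hdiag hmul
  by_cases hρ : ∃ a b, (a, b) ∈ ρ ∧ a ≠ b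
  · obtain ⟨a, b, hab, hne⟩ := hρ
    have huniv (c d : S) : (c, d) ∈ ρ := by
      obtain ⟨x, y, rfl, rfl⟩ := h hne c d
      exact hmul _ _ (hmul _ _ (hdiag x) hab) (hdiag y)
    exact ⟨fun _ _ _ => huniv _ _, fun _ _ _ _ _ => huniv _ _⟩
  · have heq (a b : S) (hab : (a, b) ∈ ρ) : a = b := by_contra fun hne => hρ ⟨a, b, hab, hne⟩
    exact ⟨fun x y hxy => heq x y hxy ▸ hdiag x, fun x y z hxy hyz => heq x y hxy ▸ hyz⟩

theorem IsPairTransitive.not_isGroupOf {S : Type*} [Semigroup S] [Nontrivial S]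
    (h : IsPairTransitive S) : ¬ IsGroupOf ((· * ·) : S → S → S) := by
  rintro ⟨e, (he : ∀ s, e * s = s ∧ s * e = s), (hinv : ∀ s, ∃ t, s * t = e ∧ t * s = e)⟩
  obtain ⟨a, b, hab⟩ := exists_pair_ne S
  obtain ⟨x, y, hxa, hxb⟩ := h hab a a
  obtain ⟨x', -, hx'⟩ := hinv x
  obtain ⟨y', hy', -⟩ := hinv y
  have hcancel (s : S) : x' * (x * s * y) * y' = s := calc
    x' * (x * s * y) * y' = x' * x * s * (y * y') := by simp only [mul_assoc]
    _ = s := by rw [hx', hy', (he s).1, (he s).2]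
  exact hab (by rw [← hcancel a, hxa, ← hxb, hcancel])

end PairTransitive

section SplitFactorization

variable {M N : Type*} [Monoid M] [Monoid N]

/-- Every element of `M` is a product `i * s` with `i` left invertible and `s` right invertible, the
algebraic counterpart of factoring a map through its image. -/
def HasSplitFactorization (M : Type*) [Monoid M] : Prop :=
  ∀ x : M, ∃ i i' s s' : M, i' * i = 1 ∧ s * s' = 1 ∧ i * s = x

theorem HasSplitFactorization.of_surjective (h : HasSplitFactorization M) {f : M →* N}
    (hf : Surjective f) : HasSplitFactorization N := by
  intro y
  obtain ⟨x, rfl⟩ := hf y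
  obtain ⟨i, i', s, s', hi, hs, rfl⟩ := h x
  exact ⟨f i, f i', f s, f s', by rw [← map_mul, hi, map_one], by rw [← map_mul, hs, map_one],
    (map_mul f i s).symm⟩

theorem HasSplitFactorization.exists_mul_mul_eq (h : HasSplitFactorization M) (x : M) :
    ∃ t : M, x * t * x = x := by
  obtain ⟨i, i', s, s', hi, hs, rfl⟩ := h x
  refine ⟨s' * i', ?_⟩
  calc i * s * (s' * i') * (i * s) = i * (s * s') * (i' * i) * s := by simp only [mul_assoc]
    _ = i * s := by rw [hs, hi, mul_one, mul_one]

theorem greenROf_mul_mul (i : M) {s s' t t' : M} (hs : s * s' = 1) (ht : t * t' = 1) :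
    GreenROf (· * ·) (i * s) (i * t) := by
  refine ⟨.inr ⟨t' * s, ?_⟩, .inr ⟨s' * t, ?_⟩⟩
  · change i * s = i * t * (t' * s)
    rw [mul_assoc, ← mul_assoc t, ht, one_mul]
  · change i * t = i * s * (s' * t)
    rw [mul_assoc, ← mul_assoc s, hs, one_mul]

theorem greenLOf_mul_mul {i i' j j' : M} (hi : i' * i = 1) (hj : j' * j = 1) (t : M) :
    GreenLOf (· * ·) (i * t) (j * t) := by
  refine ⟨.inr ⟨i * j', ?_⟩, .inr ⟨j * i', ?_⟩⟩
  · change i * t = i * j' * (j * t)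
    rw [mul_assoc, ← mul_assoc j', hj, one_mul]
  · change j * t = j * i' * (i * t)
    rw [mul_assoc, ← mul_assoc i', hi, one_mul]

theorem HasSplitFactorization.exists_greenROf_greenLOf (h : HasSplitFactorization M) (x y : M) :
    ∃ z : M, GreenROf (· * ·) x z ∧ GreenLOf (· * ·) z y := by
  obtain ⟨i, i', s, s', hi, hs, rfl⟩ := h x
  obtain ⟨j, j', t, t', hj, ht, rfl⟩ := h y
  exact ⟨i * t, greenROf_mul_mul i hs ht, greenLOf_mul_mul hi hj t⟩

end SplitFactorization

section FiniteToOneMaps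

variable {ι α β : Type*}

instance tendstoCofinite_extend (w : ι → α) (g : ι → β) (e : α → β) [TendstoCofinite g]
    [TendstoCofinite e] : TendstoCofinite (extend w g e) := by
  classical
  refine (tendstoCofinite_iff_finite_preimage_singleton _).2 fun b => ?_
  refine (((TendstoCofinite.finite_preimage_singleton g b).image w).union
    (TendstoCofinite.finite_preimage_singleton e b)).subset fun a ha => ?_
  by_cases hw : ∃ k, w k = a
  · rw [Set.mem_preimage, extend_def, dif_pos hw] at ha
    exact .inl ⟨hw.choose, ha, hw.choose_spec⟩
  · rw [Set.mem_preimage, extend_apply' _ _ _ hw] at ha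
    exact .inr ha

instance tendstoCofinite_sumElim (f : α → β) (g : ι → β) [TendstoCofinite f] [TendstoCofinite g] :
    TendstoCofinite (Sum.elim f g) := by
  refine (tendstoCofinite_iff_finite_preimage_singleton _).2 fun b => ?_
  rw [Set.preimage_sumElim]
  exact ((TendstoCofinite.finite_preimage_singleton f b).image _).union
    ((TendstoCofinite.finite_preimage_singleton g b).image _)

theorem infinite_range_of_tendstoCofinite [Infinite α] (f : α → β) [TendstoCofinite f] :
    (Set.range f).Infinite := fun hfin =>
  Set.infinite_univ (by simpa using TendstoCofinite.finite_preimage f hfin)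

theorem exists_injective_comp_surjective [Countable α] [Infinite α] (f : α → α)
    [TendstoCofinite f] :
    ∃ i s : α → α, Injective i ∧ Surjective s ∧ TendstoCofinite s ∧ i ∘ s = f := by
  have := (infinite_range_of_tendstoCofinite f).to_subtype
  obtain ⟨e⟩ : Nonempty (α ≃ Set.range f) := nonempty_equiv_of_countable
  let i : α → α := Subtype.val ∘ e
  let s : α → α := e.symm ∘ Set.rangeFactorization f
  have hi : Injective i := Subtype.val_injective.comp e.injective
  have his : i ∘ s = f := by
    ext a
    simp [i, s]
  have hs : Tendsto s cofinite cofinite := by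
    have hcomap : Tendsto s cofinite (comap i cofinite) :=
      tendsto_comap_iff.2 (his ▸ TendstoCofinite.tendsto_cofinite f)
    rwa [hi.comap_cofinite_eq] at hcomap
  exact ⟨i, s, hi, e.symm.surjective.comp Set.rangeFactorization_surjective, ⟨hs⟩, his⟩

theorem exists_seq_injective_sumElim (f g : α → β) [TendstoCofinite f] [TendstoCofinite g]
    (hfg : ∃ᶠ a in cofinite, f a ≠ g a) :
    ∃ y : ℕ → α, Injective (Sum.elim (f ∘ y) (g ∘ y)) := by
  let r (a b : α) : Prop := Disjoint ({f a, g a} : Set β) {f b, g b}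
  have : Std.Symm r := ⟨fun _ _ h => h.symm⟩
  have havoid (s : Finset α) : ∀ᶠ b in cofinite, ∀ a ∈ s, r a b := by
    refine (eventually_all_finset s).2 fun a _ => ?_
    have hfin : ∀ᶠ c in cofinite, c ∉ ({f a, g a} : Set β) :=
      (Set.toFinite _).eventually_cofinite_notMem
    filter_upwards [(TendstoCofinite.tendsto_cofinite f).eventually hfin,
      (TendstoCofinite.tendsto_cofinite g).eventually hfin] with b hfb hgb
    exact Set.disjoint_insert_right.2 ⟨hfb, Set.disjoint_singleton_right.2 hgb⟩
  obtain ⟨y, hne, hdisj⟩ := exists_seq_of_forall_finset_exists' (fun a => f a ≠ g a) r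
    fun s _ => (hfg.and_eventually (havoid s)).exists
  have heq {m n : ℕ} {b : β} (hm : b ∈ ({f (y m), g (y m)} : Set β))
      (hn : b ∈ ({f (y n), g (y n)} : Set β)) : m = n :=
    by_contra fun hmn => Set.disjoint_left.1 (hdisj hmn) hm hn
  refine ⟨y, Injective.sumElim (fun m n h => ?_) (fun m n h => ?_) fun m n h => ?_⟩
  · exact heq (.inl rfl) (.inl h)
  · exact heq (.inr rfl) (.inr h)
  · obtain rfl : m = n := heq (.inl rfl) (.inr h)
    exact hne m h

theorem exists_comp_comp_eq [Countable α] (a b c d : α → β) [TendstoCofinite a] [TendstoCofinite b]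
    [TendstoCofinite c] [TendstoCofinite d] (hab : ∃ᶠ n in cofinite, a n ≠ b n) :
    ∃ (x : β → β) (y : α → α), TendstoCofinite x ∧ Injective y ∧ x ∘ a ∘ y = c ∧ x ∘ b ∘ y = d := by
  obtain ⟨u, hu⟩ := exists_seq_injective_sumElim a b hab
  obtain ⟨k, hk⟩ := exists_injective_nat α
  let w : α ⊕ α → β := Sum.elim (a ∘ u ∘ k) (b ∘ u ∘ k)
  have hw : Injective w := by
    simpa only [w, Sum.elim_comp_map, comp_assoc] using hu.comp (hk.sumMap hk)
  have huk : Injective (u ∘ k) := Injective.of_comp (f := a) (hw.comp Sum.inl_injective)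
  have hx : extend w (Sum.elim c d) id ∘ w = Sum.elim c d := extend_comp hw _ _
  exact ⟨extend w (Sum.elim c d) id, u ∘ k, inferInstance, huk,
    funext fun n => congrFun hx (.inl n), funext fun n => congrFun hx (.inr n)⟩

end FiniteToOneMaps

section FiniteToOneGerms

/-- The monoid, under composition, of self-maps of `α` with finite fibres. -/
def finiteToOneEnd (α : Type*) : Submonoid (Function.End α) where
  carrier := {f | TendstoCofinite f}
  one_mem' := TendstoCofinite.id
  mul_mem' {f g} (_ : TendstoCofinite f) (_ : TendstoCofinite g) := TendstoCofinite.comp g f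

instance {α : Type*} (f : finiteToOneEnd α) : TendstoCofinite f.1 := f.2

/-- Equality off a finite set, as a congruence on finite-to-one maps. -/
def almostEqual (α : Type*) : Con (finiteToOneEnd α) where
  r f g := f.1 =ᶠ[cofinite] g.1
  iseqv := ⟨fun _ => .rfl, .symm, .trans⟩
  mul' {_ g h _} hfg hhk :=
    (hfg.comp_tendsto (TendstoCofinite.tendsto_cofinite h.1)).trans (hhk.fun_comp g.1)

/-- Finite-to-one self-maps of `α` up to equality off a finite set. -/
abbrev FiniteToOneGerm (α : Type*) : Type _ := (almostEqual α).Quotient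

variable (α : Type*)

theorem hasSplitFactorization_finiteToOneEnd [Countable α] [Infinite α] :
    HasSplitFactorization (finiteToOneEnd α) := by
  intro f
  obtain ⟨i, s, hi, hs, hs_fin, his⟩ := exists_injective_comp_surjective f.1
  exact ⟨⟨i, tendstoCofinite_of_injective hi⟩, ⟨extend i id id, tendstoCofinite_extend i id id⟩,
    ⟨s, hs_fin⟩, ⟨surjInv hs, tendstoCofinite_of_injective (injective_surjInv hs)⟩,
    Subtype.ext (extend_comp hi id id), Subtype.ext (rightInverse_surjInv hs).comp_eq_id,
    Subtype.ext his⟩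

theorem hasSplitFactorization_finiteToOneGerm [Countable α] [Infinite α] :
    HasSplitFactorization (FiniteToOneGerm α) :=
  (hasSplitFactorization_finiteToOneEnd α).of_surjective
    (Con.mk'_surjective (c := almostEqual α))

theorem isPairTransitive_finiteToOneGerm [Countable α] : IsPairTransitive (FiniteToOneGerm α) := by
  intro a b hab c d
  induction a using Con.induction_on with | _ a
  induction b using Con.induction_on with | _ b
  induction c using Con.induction_on with | _ c
  induction d using Con.induction_on with | _ d
  have hne : ∃ᶠ n in cofinite, a.1 n ≠ b.1 n :=
    not_eventually.1 fun h => hab ((almostEqual α).eq.2 h)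
  obtain ⟨x, y, hx, hy, hxa, hxb⟩ := exists_comp_comp_eq a.1 b.1 c.1 d.1 hne
  exact ⟨(⟨x, hx⟩ : finiteToOneEnd α), (⟨y, tendstoCofinite_of_injective hy⟩ : finiteToOneEnd α),
    congrArg _ (Subtype.ext hxa), congrArg _ (Subtype.ext hxb)⟩

instance [Infinite α] : Nontrivial (FiniteToOneGerm α) := by
  let k : ℕ ↪ α := Infinite.natEmbedding α
  have : TendstoCofinite (k ∘ Nat.succ) :=
    tendstoCofinite_of_injective (k.injective.comp Nat.succ_injective)
  let shift : finiteToOneEnd α := ⟨extend k (k ∘ Nat.succ) id, tendstoCofinite_extend _ _ _⟩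
  refine ⟨shift, 1, fun h => ?_⟩
  have hshift : shift.1 =ᶠ[cofinite] id := (almostEqual α).eq.1 h
  obtain ⟨n, hn⟩ := (k.injective.tendsto_cofinite.eventually hshift).exists
  exact n.succ_ne_self (k.injective ((k.injective.extend_apply _ _ n).symm.trans hn))

end FiniteToOneGerms

/-- there exists a semigroup which is DSC, regular and bisimple
(any two elements are `D = R ∘ L`-related), but is not a group. -/
theorem exists_nongroup_regular_bisimple_DSC :
    ∃ (S : Type) (mul : S → S → S),
      (∀ x y z : S, mul (mul x y) z = mul x (mul y z)) ∧
      IsDSCOf mul ∧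
      (∀ s : S, ∃ t : S, mul (mul s t) s = s) ∧
      (∀ x y : S, ∃ z : S, GreenROf mul x z ∧ GreenLOf mul z y) ∧
      ¬ IsGroupOf mul := by
  exact ⟨FiniteToOneGerm ℕ, (· * ·), mul_assoc,
    (isPairTransitive_finiteToOneGerm ℕ).isDSCOf,
    (hasSplitFactorization_finiteToOneGerm ℕ).exists_mul_mul_eq,
    (hasSplitFactorization_finiteToOneGerm ℕ).exists_greenROf_greenLOf,
    (isPairTransitive_finiteToOneGerm ℕ).not_isGroupOf⟩
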